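/- Suppose there exists θ^L ∈ (0,1) such that u''(θ) < 0 for all θ ∈ [0,θ^L) at which u'' exists, and u''(θ) > 0 for all θ ∈ (θ^L,1] at which u'' exists. If there is no θ_*^L ∈ (θ^L,1) satisfying u(m) + u'(m)·(θ_*^L − m) = u(θ_*^L) with m = E_F[θ|(0,θ_*^L)], then complete pooling P_* = [0,1] is optimal for u, and E_F[θ] ∈ (0,θ^L). -/

import Mathlib

open MeasureTheory Set
open scoped Classical

noncomputable section

/-- CDF associated with the density `f` (relevant on `[0,1]`): `F(x) = ∫_0^x f`. -/
def cdfF (f : ℝ → ℝ) (x : ℝ) : ℝ := ∫ t in (0:ℝ)..x, f t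

/-- Conditional mean `E_F[θ | (ξ,ζ)]` of `θ` on the interval `(ξ, ζ)` under density `f`. -/
def condMean (f : ℝ → ℝ) (ξ ζ : ℝ) : ℝ :=
  (∫ t in ξ..ζ, t * f t) / (∫ t in ξ..ζ, f t)

/-- `f` is a strictly positive density of a probability measure on `[0,1]`. -/
def IsDensity (f : ℝ → ℝ) : Prop :=
  (∀ θ ∈ Icc (0:ℝ) 1, 0 < f θ) ∧ IntegrableOn f (Icc (0:ℝ) 1) ∧
    (∫ t in (0:ℝ)..1, f t) = 1

/-- An open pooling set: a relatively open subset of `[0,1]`. -/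
def IsPoolingSet (P : Set ℝ) : Prop :=
  ∃ U : Set ℝ, IsOpen U ∧ P = U ∩ Icc (0:ℝ) 1

/-- Left endpoint `ξ_i` of the interval component of `θ` in `P`. -/
def compInf (P : Set ℝ) (θ : ℝ) : ℝ := sInf (connectedComponentIn P θ)

/-- Right endpoint `ζ_i` of the interval component of `θ` in `P`. -/
def compSup (P : Set ℝ) (θ : ℝ) : ℝ := sSup (connectedComponentIn P θ)

/-- The posterior-mean map induced by the pooling set `P`: states in a pooled
interval are mapped to the conditional mean of that interval, other states to
themselves. -/
def poolMean (f : ℝ → ℝ) (P : Set ℝ) (θ : ℝ) : ℝ :=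
  if θ ∈ P then condMean f (compInf P θ) (compSup P θ) else θ

/-- The induced distribution `G_P` of posterior means. -/
def Gp (f : ℝ → ℝ) (P : Set ℝ) (θ : ℝ) : ℝ :=
  if θ ∈ P then
    (if θ < condMean f (compInf P θ) (compSup P θ) then cdfF f (compInf P θ)
     else cdfF f (compSup P θ))
  else cdfF f θ

/-- `Γ_P(θ) = ∫_0^θ G_P(t) dt`. -/
def Gam (f : ℝ → ℝ) (P : Set ℝ) (θ : ℝ) : ℝ := ∫ t in (0:ℝ)..θ, Gp f P t

/-- The value `∫_0^1 u(θ) dG_P(θ)` of the pooling set `P` under payoff `u`,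
written as the expectation of `u` composed with the posterior-mean map. -/
def poolValue (f : ℝ → ℝ) (u : ℝ → ℝ) (P : Set ℝ) : ℝ :=
  ∫ θ in (0:ℝ)..1, u (poolMean f P θ) * f θ

/-- `P` is an optimal pooling set for `u`. -/
def IsOptimal (f : ℝ → ℝ) (u : ℝ → ℝ) (P : Set ℝ) : Prop :=
  IsPoolingSet P ∧ ∀ Q : Set ℝ, IsPoolingSet Q → poolValue f u Q ≤ poolValue f u P

/-- `u` is continuously differentiable on `[0,1]` with derivative `u'`, and `u'`
is absolutely continuous with integrable a.e. derivative `u''` (encoded via the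
fundamental theorem of calculus). -/
def C1AC (u u' u'' : ℝ → ℝ) : Prop :=
  (∀ θ ∈ Icc (0:ℝ) 1, HasDerivAt u (u' θ) θ) ∧
  ContinuousOn u' (Icc (0:ℝ) 1) ∧
  IntegrableOn u'' (Icc (0:ℝ) 1) ∧
  (∀ θ ∈ Icc (0:ℝ) 1, u' θ = u' 0 + ∫ t in (0:ℝ)..θ, u'' t)


theorem cm_bounds (f : ℝ → ℝ) (hf : IsDensity f) (a b : ℝ) (ha : 0 ≤ a) (hab : a < b) (hb : b ≤ 1) :
    0 < (∫ t in a..b, f t) ∧ IntervalIntegrable f volume a b ∧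
    IntervalIntegrable (fun t => t * f t) volume a b ∧
    a < condMean f a b ∧ condMean f a b < b := by
  obtain ⟨h1, h2, -⟩ := hf
  have hi : IntervalIntegrable f volume a b := by
    rw [intervalIntegrable_iff_integrableOn_Icc_of_le hab.le]
    exact h2.mono_set (Icc_subset_Icc ha hb)
  have hi2 : IntervalIntegrable (fun t => t * f t) volume a b :=
    hi.continuousOn_mul continuousOn_id
  have p0 : 0 < (∫ t in a..b, f t) := by
    apply intervalIntegral.intervalIntegral_pos_of_pos_on hi _ hab
    intro x hx
    exact h1 x ⟨by linarith [hx.1], by linarith [hx.2]⟩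
  have p1 : 0 < (∫ t in a..b, (t * f t - a * f t)) := by
    apply intervalIntegral.intervalIntegral_pos_of_pos_on (hi2.sub (hi.const_mul a)) _ hab
    intro x hx
    have := h1 x ⟨by linarith [hx.1], by linarith [hx.2]⟩
    have := mul_pos (sub_pos.2 hx.1) this
    linarith
  have p2 : 0 < (∫ t in a..b, (b * f t - t * f t)) := by
    apply intervalIntegral.intervalIntegral_pos_of_pos_on ((hi.const_mul b).sub hi2) _ hab
    intro x hx
    have := h1 x ⟨by linarith [hx.1], by linarith [hx.2]⟩
    have := mul_pos (sub_pos.2 hx.2) this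
    linarith
  rw [intervalIntegral.integral_sub hi2 (hi.const_mul a), intervalIntegral.integral_const_mul] at p1
  rw [intervalIntegral.integral_sub (hi.const_mul b) hi2, intervalIntegral.integral_const_mul] at p2
  refine ⟨p0, hi, hi2, ?_, ?_⟩
  · unfold condMean
    rw [lt_div_iff₀ p0]; linarith
  · unfold condMean
    rw [div_lt_iff₀ p0]; linarith

theorem comps (f : ℝ → ℝ) (P : Set ℝ) (hP : IsPoolingSet P) :
    ∃ S : Set (Set ℝ), S.Countable ∧ S.PairwiseDisjoint id ∧ P = ⋃ i : S, (i : Set ℝ) ∧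
      ∀ C ∈ S, MeasurableSet C ∧ C ⊆ P ∧ ∃ a b, 0 ≤ a ∧ a < b ∧ b ≤ 1 ∧ C =ᵐ[volume] Ioc a b ∧
        ∀ θ ∈ C, poolMean f P θ = condMean f a b := by
  obtain ⟨U, hU, rfl⟩ := hP
  set P := U ∩ Icc (0:ℝ) 1 with hPdef
  -- local interval
  have key : ∀ x ∈ P, ∃ c d, c < d ∧ Icc c d ⊆ connectedComponentIn P x := by
    intro x hx
    obtain ⟨ε, hε, hball⟩ := Metric.isOpen_iff.1 hU x hx.1
    rw [Real.ball_eq_Ioo] at hball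
    refine ⟨max 0 (x - ε/2), min 1 (x + ε/2), ?_, ?_⟩
    · have := hx.2.1
      have := hx.2.2
      simp only [max_lt_iff, lt_min_iff]
      refine ⟨⟨by norm_num, by linarith⟩, by linarith, by linarith⟩
    · apply IsPreconnected.subset_connectedComponentIn isPreconnected_Icc
      · have := hx.2.1
        have := hx.2.2
        simp only [mem_Icc, max_le_iff, le_min_iff]
        refine ⟨⟨by linarith, by linarith⟩, by linarith, by linarith⟩
      · intro y hy
        simp only [mem_Icc, max_le_iff, le_min_iff] at hy
        exact ⟨hball ⟨by linarith [hy.1.2], by linarith [hy.2.2]⟩, hy.1.1, hy.2.1⟩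
  refine ⟨(fun x => connectedComponentIn P x) '' P, ?_, ?_, ?_, ?_⟩
  rotate_left
  · rintro _ ⟨x, hx, rfl⟩ _ ⟨y, hy, rfl⟩ hne
    rw [Function.onFun, Set.disjoint_left]
    intro z hz1 hz2
    exact hne ((connectedComponentIn_eq hz1).trans (connectedComponentIn_eq hz2).symm)
  · apply Subset.antisymm
    · intro x hx
      rw [mem_iUnion]
      exact ⟨⟨_, x, hx, rfl⟩, mem_connectedComponentIn hx⟩
    · apply iUnion_subset
      rintro ⟨_, x, hx, rfl⟩
      exact connectedComponentIn_subset P x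
  · rintro _ ⟨x, hx, rfl⟩
    have hpc : IsPreconnected (connectedComponentIn P x) := isPreconnected_connectedComponentIn
    have hsub : connectedComponentIn P x ⊆ P := connectedComponentIn_subset P x
    have hbb : BddBelow (connectedComponentIn P x) := ⟨0, fun y hy => (hsub hy).2.1⟩
    have hba : BddAbove (connectedComponentIn P x) := ⟨1, fun y hy => (hsub hy).2.2⟩
    have hne : (connectedComponentIn P x).Nonempty := ⟨x, mem_connectedComponentIn hx⟩
    have hIoo : Ioo (sInf (connectedComponentIn P x)) (sSup (connectedComponentIn P x)) ⊆
        connectedComponentIn P x :=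
      IsConnected.Ioo_csInf_csSup_subset ⟨hne, hpc⟩ hbb hba
    have hIcc : connectedComponentIn P x ⊆ Icc (sInf (connectedComponentIn P x)) (sSup (connectedComponentIn P x)) :=
      subset_Icc_csInf_csSup hbb hba
    refine ⟨hpc.ordConnected.measurableSet, hsub, sInf (connectedComponentIn P x),
      sSup (connectedComponentIn P x), ?_, ?_, ?_, ?_, ?_⟩
    · exact le_csInf hne fun y hy => (hsub hy).2.1
    · obtain ⟨c, d, hcd, h⟩ := key x hx
      have h1 := hIcc (h ⟨le_rfl, hcd.le⟩)
      have h2 := hIcc (h ⟨hcd.le, le_rfl⟩)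
      linarith [h1.1, h2.2]
    · exact csSup_le hne fun y hy => (hsub hy).2.2
    · apply Filter.EventuallyLE.antisymm
      · exact (HasSubset.Subset.eventuallyLE hIcc).trans_eq Ioc_ae_eq_Icc.symm
      · exact Ioo_ae_eq_Ioc.symm.trans_le (HasSubset.Subset.eventuallyLE hIoo)
    · intro θ hθ
      unfold poolMean compInf compSup
      rw [if_pos (hsub hθ), connectedComponentIn_eq hθ]
  · apply Set.PairwiseDisjoint.countable_of_nonempty_interior (s := id)
    · rintro _ ⟨x, hx, rfl⟩ _ ⟨y, hy, rfl⟩ hne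
      rw [Function.onFun, Set.disjoint_left]
      intro z hz1 hz2
      exact hne ((connectedComponentIn_eq hz1).trans (connectedComponentIn_eq hz2).symm)
    · rintro _ ⟨x, hx, rfl⟩
      obtain ⟨c, d, hcd, h⟩ := key x hx
      refine (Set.Nonempty.mono (interior_mono h) ?_)
      rw [interior_Icc]
      exact nonempty_Ioo.2 hcd

theorem pm_mem (f : ℝ → ℝ) (hf : IsDensity f) (P : Set ℝ) (hP : IsPoolingSet P) (θ : ℝ)
    (hθ : θ ∈ Icc (0:ℝ) 1) : poolMean f P θ ∈ Icc (0:ℝ) 1 := by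
  by_cases h : θ ∈ P
  · obtain ⟨S, hc, hd, hu, hS⟩ := comps f P hP
    rw [hu, mem_iUnion] at h
    obtain ⟨⟨C, hC⟩, hθC⟩ := h
    obtain ⟨-, -, a, b, ha, hab, hb, -, h⟩ := hS C hC
    rw [h θ hθC]
    obtain ⟨-, -, -, h1, h2⟩ := cm_bounds f hf a b ha hab hb
    exact ⟨by linarith, by linarith⟩
  · unfold poolMean; rwa [if_neg h]

theorem pool_meas (P : Set ℝ) (hP : IsPoolingSet P) : MeasurableSet P := by
  obtain ⟨U, hU, rfl⟩ := hP
  exact hU.measurableSet.inter measurableSet_Icc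

theorem pool_sub (P : Set ℝ) (hP : IsPoolingSet P) : P ⊆ Icc (0:ℝ) 1 := by
  obtain ⟨U, hU, rfl⟩ := hP
  exact inter_subset_right

theorem pm_aesm (f : ℝ → ℝ) (P : Set ℝ) (hP : IsPoolingSet P) (g : ℝ → ℝ)
    (hg : ContinuousOn g (Icc (0:ℝ) 1)) :
    AEStronglyMeasurable (fun θ => g (poolMean f P θ)) (volume.restrict (Icc (0:ℝ) 1)) := by
  have hm := pool_meas P hP
  have hE : Icc (0:ℝ) 1 = P ∪ (Icc (0:ℝ) 1 \ P) := (union_diff_cancel (pool_sub P hP)).symm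
  rw [hE, aestronglyMeasurable_union_iff]
  constructor
  · obtain ⟨S, hc, hd, hu, hS⟩ := comps f P hP
    haveI := hc.to_subtype
    have : AEStronglyMeasurable (fun θ => g (poolMean f P θ))
        (volume.restrict (⋃ i : S, (i : Set ℝ))) := by
      rw [aestronglyMeasurable_iUnion_iff]
      rintro ⟨C, hC⟩
      obtain ⟨hCm, -, a, b, ha, hab, hb, -, h⟩ := hS C hC
      refine (aestronglyMeasurable_const (b := g (condMean f a b))).congr ?_
      filter_upwards [ae_restrict_mem hCm] with θ hθ
      rw [h θ hθ]
    rwa [← hu] at this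
  · have h1 : AEStronglyMeasurable g (volume.restrict (Icc (0:ℝ) 1 \ P)) :=
      (hg.mono diff_subset).aestronglyMeasurable (measurableSet_Icc.diff hm)
    refine h1.congr ?_
    filter_upwards [ae_restrict_mem (measurableSet_Icc.diff hm)] with θ hθ
    unfold poolMean; rw [if_neg hθ.2]

theorem pm_int (f : ℝ → ℝ) (hf : IsDensity f) (P : Set ℝ) (hP : IsPoolingSet P) (g : ℝ → ℝ)
    (hg : ContinuousOn g (Icc (0:ℝ) 1)) :
    IntegrableOn (fun θ => g (poolMean f P θ) * f θ) (Icc (0:ℝ) 1) := by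
  obtain ⟨K, hK⟩ := isCompact_Icc.exists_bound_of_continuousOn hg
  refine Integrable.bdd_mul (c := K) hf.2.1 (pm_aesm f P hP g hg) ?_
  filter_upwards [ae_restrict_mem measurableSet_Icc] with θ hθ
  exact hK _ (pm_mem f hf P hP θ hθ)

theorem pm_mean (f : ℝ → ℝ) (hf : IsDensity f) (P : Set ℝ) (hP : IsPoolingSet P) :
    ∫ θ in Icc (0:ℝ) 1, poolMean f P θ * f θ = ∫ θ in Icc (0:ℝ) 1, θ * f θ := by
  have i1 : IntegrableOn (fun θ => poolMean f P θ * f θ) (Icc (0:ℝ) 1) :=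
    pm_int f hf P hP id continuousOn_id
  have i2 : IntegrableOn (fun θ => θ * f θ) (Icc (0:ℝ) 1) := by
    rw [← intervalIntegrable_iff_integrableOn_Icc_of_le zero_le_one]
    exact (cm_bounds f hf 0 1 le_rfl one_pos le_rfl).2.2.1
  have hm := pool_meas P hP
  have hs := pool_sub P hP
  have hE : Icc (0:ℝ) 1 = P ∪ (Icc (0:ℝ) 1 \ P) := (union_diff_cancel hs).symm
  have hdm := (measurableSet_Icc (a := (0:ℝ)) (b := 1)).diff hm
  rw [hE, setIntegral_union disjoint_sdiff_right hdm (i1.mono_set hs) (i1.mono_set diff_subset),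
    setIntegral_union disjoint_sdiff_right hdm (i2.mono_set hs) (i2.mono_set diff_subset)]
  congr 1
  · obtain ⟨S, hc, hd, hu, hS⟩ := comps f P hP
    haveI := hc.to_subtype
    have j1 := i1.mono_set hs
    have j2 := i2.mono_set hs
    have hm' : ∀ i : S, MeasurableSet (i : Set ℝ) := fun i => (hS i i.2).1
    have hd' : Pairwise (Function.onFun Disjoint fun i : S => (i : Set ℝ)) := by
      intro i j hij
      exact hd i.2 j.2 (fun h => hij (Subtype.ext h))
    have e : ∀ g : ℝ → ℝ, IntegrableOn g P → ∫ θ in P, g θ = ∑' i : S, ∫ θ in (i : Set ℝ), g θ := by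
      intro g hg
      rw [hu] at hg
      have := integral_iUnion hm' hd' hg
      rwa [← hu] at this
    rw [e _ j1, e _ j2]
    congr 1
    ext ⟨C, hC⟩
    obtain ⟨hCm, -, a, b, ha, hab, hb, hae, h⟩ := hS C hC
    obtain ⟨p0, -⟩ := cm_bounds f hf a b ha hab hb
    have : ∫ θ in C, poolMean f P θ * f θ = ∫ θ in C, condMean f a b * f θ :=
      setIntegral_congr_fun hCm fun θ hθ => by simp only [h θ hθ]
    simp only
    rw [this, setIntegral_congr_set hae, setIntegral_congr_set hae,
      ← intervalIntegral.integral_of_le hab.le, ← intervalIntegral.integral_of_le hab.le,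
      intervalIntegral.integral_const_mul]
    unfold condMean
    field_simp
  · apply setIntegral_congr_fun hdm
    intro θ hθ
    simp only [poolMean, if_neg hθ.2]

theorem pv_full (f : ℝ → ℝ) (hf : IsDensity f) (u : ℝ → ℝ) :
    poolValue f u (Icc 0 1) = u (condMean f 0 1) := by
  have : ∀ θ ∈ Icc (0:ℝ) 1, poolMean f (Icc 0 1) θ = condMean f 0 1 := by
    intro θ hθ
    unfold poolMean compInf compSup
    rw [if_pos hθ, isPreconnected_Icc.connectedComponentIn hθ, csInf_Icc zero_le_one,
      csSup_Icc zero_le_one]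
  unfold poolValue
  rw [intervalIntegral.integral_congr (g := fun θ => u (condMean f 0 1) * f θ)]
  · rw [intervalIntegral.integral_const_mul, hf.2.2, mul_one]
  · intro θ hθ
    rw [uIcc_of_le zero_le_one] at hθ
    simp only [this θ hθ]

theorem pv_bound (f : ℝ → ℝ) (hf : IsDensity f) (u : ℝ → ℝ) (hu : ContinuousOn u (Icc (0:ℝ) 1))
    (s : ℝ) (hT : ∀ x ∈ Icc (0:ℝ) 1, u x ≤ u (condMean f 0 1) + s * (x - condMean f 0 1))
    (P : Set ℝ) (hP : IsPoolingSet P) : poolValue f u P ≤ u (condMean f 0 1) := by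
  set m := condMean f 0 1 with hm
  have hm' : m = ∫ θ in Icc (0:ℝ) 1, θ * f θ := by
    rw [hm, condMean, hf.2.2, div_one, intervalIntegral.integral_of_le zero_le_one,
      integral_Icc_eq_integral_Ioc]
  have h1 : ∫ θ in Icc (0:ℝ) 1, f θ = 1 := by
    rw [integral_Icc_eq_integral_Ioc, ← intervalIntegral.integral_of_le zero_le_one, hf.2.2]
  have i1 : IntegrableOn (fun θ => poolMean f P θ * f θ) (Icc (0:ℝ) 1) :=
    pm_int f hf P hP id continuousOn_id
  unfold poolValue
  rw [intervalIntegral.integral_of_le zero_le_one, ← integral_Icc_eq_integral_Ioc]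
  calc _ ≤ ∫ θ in Icc (0:ℝ) 1, ((u m - s * m) * f θ + s * (poolMean f P θ * f θ)) := by
        apply setIntegral_mono_on (pm_int f hf P hP u hu) _ measurableSet_Icc
        · intro θ hθ
          have := mul_le_mul_of_nonneg_right (hT _ (pm_mem f hf P hP θ hθ)) (hf.1 θ hθ).le
          linarith
        · exact (hf.2.1.const_mul _).add (i1.const_mul s)
    _ = u m := by
        rw [integral_add (hf.2.1.const_mul _) (i1.const_mul s), integral_const_mul,
          integral_const_mul, pm_mean f hf P hP, ← hm', h1]
        ring

theorem tan_lt {u u' : ℝ → ℝ} {a b : ℝ} (hd : ∀ θ ∈ Icc a b, HasDerivAt u (u' θ) θ)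
    (hu' : StrictMonoOn u' (Icc a b)) (x y : ℝ) (hx : x ∈ Icc a b) (hy : y ∈ Icc a b)
    (hxy : x ≠ y) : u x + u' x * (y - x) < u y := by
  rcases lt_or_gt_of_ne hxy with h | h
  · obtain ⟨c, hc, e⟩ := exists_hasDerivAt_eq_slope u u' h
      (fun z hz => (hd z ⟨hx.1.trans hz.1, hz.2.trans hy.2⟩).continuousAt.continuousWithinAt)
      (fun z hz => hd z ⟨hx.1.trans hz.1.le, hz.2.le.trans hy.2⟩)
    have := hu' hx ⟨hx.1.trans hc.1.le, hc.2.le.trans hy.2⟩ hc.1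
    rw [e, lt_div_iff₀ (by linarith)] at this
    linarith
  · obtain ⟨c, hc, e⟩ := exists_hasDerivAt_eq_slope u u' h
      (fun z hz => (hd z ⟨hy.1.trans hz.1, hz.2.trans hx.2⟩).continuousAt.continuousWithinAt)
      (fun z hz => hd z ⟨hy.1.trans hz.1.le, hz.2.le.trans hx.2⟩)
    have := hu' ⟨hy.1.trans hc.1.le, hc.2.le.trans hx.2⟩ hx hc.2
    rw [e, div_lt_iff₀ (by linarith)] at this
    linarith

/-- one inflection point `θ^L`; if no `θ_*^L ∈ (θ^L,1)` satisfies
the tangency condition, then complete pooling `[0,1]` is optimal for `u`, and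
`E_F[θ] ∈ (0,θ^L)`. -/
theorem complete_pooling_optimal (f : ℝ → ℝ) (hf : IsDensity f)
    (u u' u'' : ℝ → ℝ) (hu : C1AC u u' u'')
    (θL : ℝ) (hθL : θL ∈ Ioo (0:ℝ) 1)
    (hneg : ∀ θ ∈ Ico (0:ℝ) θL, u'' θ < 0)
    (hpos : ∀ θ ∈ Ioc θL (1:ℝ), 0 < u'' θ)
    (hno : ¬ ∃ x ∈ Ioo θL (1:ℝ),
      u (condMean f 0 x) + u' (condMean f 0 x) * (x - condMean f 0 x) = u x) :
    IsOptimal f u (Icc (0:ℝ) 1) ∧ (∫ t in (0:ℝ)..1, t * f t) ∈ Ioo 0 θL := by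
  obtain ⟨hd, hc', hi'', hft⟩ := hu
  obtain ⟨h0L, hL1⟩ := hθL
  have hdiff : ∀ x ∈ Icc (0:ℝ) 1, ∀ y ∈ Icc (0:ℝ) 1, x < y →
      IntervalIntegrable u'' volume x y ∧ u' y - u' x = ∫ t in x..y, u'' t := by
    intro x hx y hy hxy
    have i : ∀ a ∈ Icc (0:ℝ) 1, ∀ b ∈ Icc (0:ℝ) 1, IntervalIntegrable u'' volume a b := by
      intro a ha b hb
      apply IntegrableOn.intervalIntegrable
      exact hi''.mono_set (uIcc_subset_Icc ha hb)
    refine ⟨i x hx y hy, ?_⟩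
    have z : (0:ℝ) ∈ Icc (0:ℝ) 1 := ⟨le_rfl, zero_le_one⟩
    rw [hft y hy, hft x hx, ← intervalIntegral.integral_add_adjacent_intervals (i 0 z x hx) (i x hx y hy)]
    ring
  have hmono : StrictMonoOn u' (Icc θL 1) := by
    intro x hx y hy hxy
    obtain ⟨i, e⟩ := hdiff x ⟨by linarith [hx.1], hx.2⟩ y ⟨by linarith [hy.1], hy.2⟩ hxy
    have := intervalIntegral.intervalIntegral_pos_of_pos_on i
      (fun t ht => hpos t ⟨by linarith [ht.1, hx.1], by linarith [ht.2, hy.2]⟩) hxy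
    linarith
  have hanti : StrictMonoOn (fun x => - u' x) (Icc 0 θL) := by
    intro x hx y hy hxy
    obtain ⟨i, e⟩ := hdiff x ⟨hx.1, by linarith [hx.2]⟩ y ⟨hy.1, by linarith [hy.2]⟩ hxy
    have := intervalIntegral.intervalIntegral_pos_of_pos_on i.neg
      (fun t ht => neg_pos.2 (hneg t ⟨by linarith [ht.1, hx.1], by linarith [ht.2, hy.2]⟩)) hxy
    simp only [Pi.neg_apply, intervalIntegral.integral_neg] at this
    show - u' x < - u' y
    linarith
  have hconv := tan_lt (fun θ hθ => hd θ ⟨by linarith [hθ.1], hθ.2⟩) hmono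
  have hconc := tan_lt (u := fun x => - u x)
    (fun θ hθ => (hd θ ⟨hθ.1, by linarith [hθ.2]⟩).neg) hanti
  have huc : ContinuousOn u (Icc (0:ℝ) 1) :=
    fun x hx => (hd x hx).continuousAt.continuousWithinAt
  -- continuity of the conditional mean
  have hcm : ContinuousOn (fun x => condMean f 0 x) (Icc θL 1) := by
    have hsub : Icc θL 1 ⊆ uIcc (0:ℝ) 1 := by
      rw [uIcc_of_le zero_le_one]; exact Icc_subset_Icc h0L.le le_rfl
    obtain ⟨-, -, i2, -⟩ := cm_bounds f hf 0 1 le_rfl one_pos le_rfl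
    rw [intervalIntegrable_iff_integrableOn_Icc_of_le zero_le_one,
      ← uIcc_of_le (zero_le_one (α := ℝ))] at i2
    have i1 := hf.2.1
    rw [← uIcc_of_le (zero_le_one (α := ℝ))] at i1
    refine ContinuousOn.div
      ((intervalIntegral.continuousOn_primitive_interval i2).mono hsub)
      ((intervalIntegral.continuousOn_primitive_interval i1).mono hsub) ?_
    intro x hx
    exact (cm_bounds f hf 0 x le_rfl (by linarith [hx.1]) hx.2).1.ne'
  have hcmem : ∀ x ∈ Icc θL 1, 0 < condMean f 0 x ∧ condMean f 0 x < x := fun x hx =>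
    (cm_bounds f hf 0 x le_rfl (by linarith [hx.1]) hx.2).2.2.2
  have hmaps : MapsTo (fun x => condMean f 0 x) (Icc θL 1) (Icc 0 1) := fun x hx =>
    ⟨(hcmem x hx).1.le, by linarith [(hcmem x hx).2, hx.2]⟩
  have hφc : ContinuousOn (fun x => u (condMean f 0 x) + u' (condMean f 0 x) * (x - condMean f 0 x) - u x)
      (Icc θL 1) :=
    ((huc.comp hcm hmaps).add ((hc'.comp hcm hmaps).mul (continuousOn_id.sub hcm))).sub
      (huc.mono (Icc_subset_Icc h0L.le le_rfl))
  have hφL : 0 < u (condMean f 0 θL) + u' (condMean f 0 θL) * (θL - condMean f 0 θL) - u θL := by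
    obtain ⟨h1, h2⟩ := hcmem θL ⟨le_rfl, hL1.le⟩
    have := hconc _ θL ⟨h1.le, h2.le⟩ ⟨h0L.le, le_rfl⟩ h2.ne
    linarith
  have hφ1 : 0 ≤ u (condMean f 0 1) + u' (condMean f 0 1) * (1 - condMean f 0 1) - u 1 := by
    by_contra hlt
    push Not at hlt
    obtain ⟨c, hc, e⟩ := intermediate_value_Ioo' hL1.le hφc (⟨hlt, hφL⟩ : (0:ℝ) ∈ Ioo _ _)
    exact hno ⟨c, hc, by simp only at e; linarith⟩
  obtain ⟨hm0, hm1⟩ := hcmem 1 ⟨hL1.le, le_rfl⟩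
  have hmL : condMean f 0 1 < θL := by
    by_contra h
    push Not at h
    have := hconv _ 1 ⟨h, hm1.le⟩ ⟨hL1.le, le_rfl⟩ hm1.ne
    linarith
  have hme : condMean f 0 1 = ∫ t in (0:ℝ)..1, t * f t := by
    rw [condMean, hf.2.2, div_one]
  have hleft : ∀ x ∈ Icc (0:ℝ) θL, u x ≤ u (condMean f 0 1) + u' (condMean f 0 1) * (x - condMean f 0 1) := by
    intro x hx
    by_cases hxe : condMean f 0 1 = x
    · rw [hxe]; simp
    · have := hconc _ x ⟨hm0.le, hmL.le⟩ hx hxe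
      linarith
  have hT : ∀ x ∈ Icc (0:ℝ) 1, u x ≤ u (condMean f 0 1) + u' (condMean f 0 1) * (x - condMean f 0 1) := by
    intro x hx
    rcases le_or_gt x θL with h | h
    · exact hleft x ⟨hx.1, h⟩
    · rcases eq_or_lt_of_le hx.2 with h1 | h1
      · rw [h1]; linarith
      · have a1 := hconv x θL ⟨h.le, hx.2⟩ ⟨le_rfl, hL1.le⟩ h.ne'
        have a2 := hconv x 1 ⟨h.le, hx.2⟩ ⟨hL1.le, le_rfl⟩ h1.ne
        have a3 := hleft θL ⟨h0L.le, le_rfl⟩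
        generalize condMean f 0 1 = m at *
        have b1 : u x + u' x * (θL - x) < u m + u' m * (θL - m) := by linarith
        have b2 : u x + u' x * (1 - x) < u m + u' m * (1 - m) := by linarith
        have c1 := mul_lt_mul_of_pos_left b1 (sub_pos.2 h1)
        have c2 := mul_lt_mul_of_pos_left b2 (sub_pos.2 h)
        have : (1 - θL) * u x < (1 - θL) * (u m + u' m * (x - m)) := by linarith
        exact (lt_of_mul_lt_mul_left this (by linarith)).le
  refine ⟨⟨⟨univ, isOpen_univ, by simp⟩, fun Q hQ => ?_⟩, ?_⟩
  · rw [pv_full f hf u]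
    exact pv_bound f hf u huc _ hT Q hQ
  · rw [← hme]; exact ⟨hm0, hmL⟩
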